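/- arXiv:2502.14879 — 2 statements merged into one kernel-verified Lean document; each statement's English description precedes it below -/
import Mathlib

section
/- Let ▷ be a strict linear order on a finite nonempty set X. For a choice function c on X the following are equivalent: (i) ▷ list rationalizes c; (ii) there is a competitive attention filter Γ relative to ▷ such that (Γ,▷) is an explanation by competitive limited attention of c. -/
open Finset

variable {X : Type*} [DecidableEq X]

/-- `a` is the `r`-greatest element among those satisfying `P`. -/
def IsRMax (r : X → X → Prop) (P : X → Prop) (a : X) : Prop :=
  P a ∧ ∀ y, P y → y ≠ a → r a y

/-- `a` is the `r`-least element among those satisfying `P`. -/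
def IsRMin (r : X → X → Prop) (P : X → Prop) (a : X) : Prop :=
  P a ∧ ∀ y, P y → y ≠ a → r y a

def Asym (r : X → X → Prop) : Prop := ∀ x y, r x y → ¬ r y x

def StrictPartial (r : X → X → Prop) : Prop :=
  Asym r ∧ ∀ x y z, r x y → r y z → r x z

def StrictLinear (r : X → X → Prop) : Prop :=
  StrictPartial r ∧ ∀ x y : X, x ≠ y → r x y ∨ r y x

/-- No cycle `x₁ ≻ x₂ ≻ … ≻ xₙ ≻ x₁` with `n ≥ 3`. -/
def Acyclic (r : X → X → Prop) : Prop :=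
  ¬ ∃ (n : ℕ) (f : ℕ → X), 3 ≤ n ∧ (∀ i, i + 1 < n → r (f i) (f (i + 1))) ∧
    r (f (n - 1)) (f 0)

def ChoiceFun (c : Finset X → X) : Prop :=
  ∀ A : Finset X, A.Nonempty → c A ∈ A

def ChoiceCorr (Γ : Finset X → Finset X) : Prop :=
  ∀ A : Finset X, A.Nonempty → (Γ A).Nonempty ∧ Γ A ⊆ A

/-- `x ∈ max(A, r)`: `x` is in `A` and is undominated in `A` w.r.t. `r`. -/
def MaxOf (r : X → X → Prop) (A : Finset X) (x : X) : Prop :=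
  x ∈ A ∧ ∀ y ∈ A, ¬ r y x

/-- The pair `(gt, rhd)` describes `c` as a shortlisting. -/
def Describes (gt rhd : X → X → Prop) (c : Finset X → X) : Prop :=
  StrictPartial gt ∧ StrictLinear rhd ∧
    ∀ A : Finset X, A.Nonempty → IsRMax rhd (MaxOf gt A) (c A)

def Shortlisting (c : Finset X → X) : Prop :=
  ∃ gt rhd : X → X → Prop, Describes gt rhd c

/-- Optimal attention filter. -/
def OptimalFilter (Γ : Finset X → Finset X) : Prop :=
  ChoiceCorr Γ ∧
  (∀ B : Finset X, B.Nonempty → ∀ x ∈ B, x ∉ Γ B → Γ (B.erase x) ⊆ Γ B) ∧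
  (∀ B : Finset X, B.Nonempty → ∀ x ∈ B, ∀ y : X,
    y ∈ Γ {x, y} → y ∈ Γ (B.erase x) → y ∈ Γ B) ∧
  (∀ B : Finset X, B.Nonempty → ∀ x ∈ B, (B.erase x).Nonempty →
    (Γ B).erase x ⊆ Γ (B.erase x))

/-- `(Γ, rhd)` is an explanation by optimal limited attention of `c`. -/
def ExplByOLA (Γ : Finset X → Finset X) (rhd : X → X → Prop) (c : Finset X → X) : Prop :=
  OptimalFilter Γ ∧ StrictLinear rhd ∧
    ∀ A : Finset X, A.Nonempty → IsRMax rhd (· ∈ Γ A) (c A)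

/-- Choice with optimal limited attention. -/
def COLA (c : Finset X → X) : Prop :=
  ∃ (Γ : Finset X → Finset X) (rhd : X → X → Prop), ExplByOLA Γ rhd c

/-- Salient attention filter relative to `rhd`. -/
def SalientFilter (rhd : X → X → Prop) (Γ : Finset X → Finset X) : Prop :=
  ChoiceCorr Γ ∧
  ∀ B : Finset X, B.Nonempty → ∀ x ∈ B,
    ¬ IsRMin rhd (· ∈ B) x → ¬ IsRMax rhd (· ∈ Γ B) x →
      (Γ B).erase x = Γ (B.erase x)

/-- `(Γ, rhd)` is an explanation by salient limited attention of `c`. -/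
def ExplBySLA (Γ : Finset X → Finset X) (rhd : X → X → Prop) (c : Finset X → X) : Prop :=
  StrictLinear rhd ∧ SalientFilter rhd Γ ∧
    ∀ A : Finset X, A.Nonempty → IsRMax rhd (· ∈ Γ A) (c A)

/-- Choice with salient limited attention. -/
def CSLA (c : Finset X → X) : Prop :=
  ∃ (Γ : Finset X → Finset X) (rhd : X → X → Prop), ExplBySLA Γ rhd c

/-- Selective salient attention filter relative to `rhd`. -/
def SelectiveFilter (rhd : X → X → Prop) (Γ : Finset X → Finset X) : Prop :=
  ChoiceCorr Γ ∧
  ∀ B : Finset X, B.Nonempty → ∀ x ∈ B,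
    ¬ IsRMax rhd (· ∈ Γ B) x → (Γ B).erase x = Γ (B.erase x)

/-- Choice with selective salient limited attention. -/
def CSSLA (c : Finset X → X) : Prop :=
  ∃ (Γ : Finset X → Finset X) (rhd : X → X → Prop),
    StrictLinear rhd ∧ SelectiveFilter rhd Γ ∧
      ∀ A : Finset X, A.Nonempty → IsRMax rhd (· ∈ Γ A) (c A)

def Rationalizable (c : Finset X → X) : Prop :=
  ∃ rhd : X → X → Prop, StrictLinear rhd ∧
    ∀ A : Finset X, A.Nonempty → IsRMax rhd (· ∈ A) (c A)

/-- Competitive attention filter relative to `rhd`. -/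
def CompetitiveFilter (rhd : X → X → Prop) (Γ : Finset X → Finset X) : Prop :=
  ChoiceCorr Γ ∧
  (∀ A : Finset X, A.Nonempty → ∀ x ∈ A, x ∉ Γ A → Γ A = Γ (A.erase x)) ∧
  (∀ A : Finset X, 1 < A.card → ∀ x y : X,
    IsRMax rhd (· ∈ A) y → IsRMax rhd (· ∈ Γ (A.erase y)) x →
      (y ∈ Γ {x, y} ↔ y ∈ Γ A))

/-- `(Γ, rhd)` is an explanation by competitive limited attention of `c`. -/
def ExplByCCLA (Γ : Finset X → Finset X) (rhd : X → X → Prop) (c : Finset X → X) : Prop :=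
  StrictLinear rhd ∧ CompetitiveFilter rhd Γ ∧
    ∀ A : Finset X, A.Nonempty → IsRMax rhd (· ∈ Γ A) (c A)

/-- Choice with competitive limited attention. -/
def CCLA (c : Finset X → X) : Prop :=
  ∃ (Γ : Finset X → Finset X) (rhd : X → X → Prop), ExplByCCLA Γ rhd c

/-- The list `f` list rationalizes `c`. -/
def ListRationalizes (f : X → X → Prop) (c : Finset X → X) : Prop :=
  StrictLinear f ∧
    ∀ A : Finset X, 1 < A.card → ∀ l : X, IsRMax f (· ∈ A) l →
      c A = c {c (A.erase l), l}

def ListRational (c : Finset X → X) : Prop :=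
  ∃ f : X → X → Prop, ListRationalizes f c

/-- `(u, v, W)` is a general-temptation representation of `c`. -/
def GTRrep (c : Finset X → X) (u v : X → ℝ) (W : ℝ → ℝ → ℝ) : Prop :=
  (∀ r s : ℝ, 0 ≤ W r s) ∧
  (∀ r₁ r₂ s : ℝ, r₁ < r₂ → W r₁ s < W r₂ s) ∧
  (∀ r s₁ s₂ : ℝ, s₁ < s₂ → W r s₁ < W r s₂) ∧
  ∀ (A : Finset X) (hA : A.Nonempty),
    c A ∈ A ∧ ∀ x ∈ A, x ≠ c A →
      W (u x) (v x - A.sup' hA v) < W (u (c A)) (v (c A) - A.sup' hA v)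

def HasGTR (c : Finset X → X) : Prop :=
  ∃ (u v : X → ℝ) (W : ℝ → ℝ → ℝ), GTRrep c u v W

/-- `(gg, U)` is a conspicuity based endogenous reference representation of `c`. -/
def CERrep (c : Finset X → X) (gg : X → X → Prop) (U : X → X → ℝ) : Prop :=
  StrictLinear gg ∧ (∀ z : X, Function.Injective (U z)) ∧
  ∀ A : Finset X, A.Nonempty → ∀ m : X, IsRMax gg (· ∈ A) m →
    c A ∈ A ∧ ∀ x ∈ A, x ≠ c A → U m x < U m (c A)

def HasCER (c : Finset X → X) : Prop :=
  ∃ (gg : X → X → Prop) (U : X → X → ℝ), CERrep c gg U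

/-- `(A, B)` is a switch of `c`. -/
def Switch (c : Finset X → X) (A B : Finset X) : Prop :=
  A.Nonempty ∧ A ⊆ B ∧ c B ∈ A ∧ c A ≠ c B

/-- Revealed salience: `x ⊨_c y`. -/
def RevSal (c : Finset X → X) (x y : X) : Prop :=
  ∃ A : Finset X, x ∈ A ∧ y ∈ A ∧ x ≠ c A ∧ c (A.erase x) ≠ c A

/-- Axiom of Revealed Temptation. -/
def ART (c : Finset X → X) : Prop :=
  ∀ B : Finset X, B.Nonempty → ∃ x ∈ B,
    ∀ B' B'' : Finset X, x ∈ B' → B' ⊂ B'' → B'' ⊆ B → ¬ Switch c B' B''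

/-- The revealed relation `R^c`. -/
def Rrel (c : Finset X → X) (x y : X) : Prop :=
  (∃ A : Finset X, A.Nonempty ∧ x = c (insert y A) ∧ x ≠ c A) ∨
  (∃ A : Finset X, A.Nonempty ∧ y = c (insert x A) ∧ x = c {x, y}) ∨
  (∃ A : Finset X, A.Nonempty ∧ y ≠ c (insert x A) ∧ y = c {x, y} ∧ y = c A)

/-- The revealed-to-follow relation `F_c`. -/
def Frel (c : Finset X → X) (x y : X) : Prop :=
  (∃ A : Finset X, A.Nonempty ∧ x = c (insert y A) ∧ y = c {x, y}) ∨
  (∃ A : Finset X, A.Nonempty ∧ x = c (insert y A) ∧ x ≠ c A) ∨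
  (∃ A : Finset X, A.Nonempty ∧ x ≠ c (insert y A) ∧ x = c {x, y} ∧ x = c A)

/-!
Let `l` be the last (that is, `rhd`-greatest) alternative of a menu `A`, and let `x` be the choice
from `A.erase l`. List rationality amounts to two facts: `c A` is `x` or `l`, and `l` is chosen
from `A` exactly when it is chosen from `{x, l}`.

If `c A` is the `rhd`-maximum of `Γ A ⊆ A`, then `l` is noticed in `A` exactly when it is chosen
from `A`. Hence the second fact is the competition property of `Γ`, and the first follows from
the attention filter property, since an unnoticed `l` may be deleted.

Conversely, for a list rational `c` take for `Γ A` the alternatives of `A` weakly below `c A`. The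
attention filter property then says that deleting an alternative above the chosen one leaves the
choice unchanged. This holds since such an alternative is read after the eventual winner and loses
its comparison.
-/

section Maximum

variable {α : Type*} {r : α → α → Prop} {P Q : α → Prop} {a b y : α}

lemma Asym.ne (hr : Asym r) (h : r a b) : a ≠ b := by
  rintro rfl
  exact hr a a h h

lemma IsRMax.not_rel (hr : Asym r) (ha : IsRMax r P a) (hy : P y) : ¬ r y a :=
  fun hya => hr y a hya (ha.2 y hy (hr.ne hya))

lemma IsRMax.unique (hr : Asym r) (ha : IsRMax r P a) (hb : IsRMax r P b) : a = b := by
  by_contra hne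
  exact hb.not_rel hr ha.1 (ha.2 b hb.1 (Ne.symm hne))

lemma IsRMax.of_imp (ha : IsRMax r P a) (hQP : ∀ y, Q y → P y) (hQ : Q a) : IsRMax r Q a :=
  ⟨hQ, fun y hy => ha.2 y (hQP y hy)⟩

lemma IsRMax.pred_iff_eq (hr : Asym r) (ha : IsRMax r P a) (hb : IsRMax r Q b)
    (hQP : ∀ y, Q y → P y) : Q a ↔ b = a :=
  ⟨fun hQ => hb.unique hr (ha.of_imp hQP hQ), fun h => h ▸ hb.1⟩

lemma isRMax_pair [DecidableEq α] (h : r b a) : IsRMax r (· ∈ ({a, b} : Finset α)) b := by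
  refine ⟨by simp, fun y hy hyb => ?_⟩
  obtain rfl : y = a := by simpa [hyb] using hy
  exact h

lemma StrictLinear.exists_isRMax (hr : StrictLinear r) {A : Finset α} (hA : A.Nonempty) :
    ∃ l, IsRMax r (· ∈ A) l := by
  classical
  have : IsStrictTotalOrder α r :=
    { irrefl := fun a h => hr.1.1.ne h rfl
      trans := hr.1.2
      trichotomous := fun a b hab hba => by_contra fun hne => (hr.2 a b hne).elim hab hba }
  -- In this order `a < b` means `r a b`, so the `r`-greatest element is the minimum.
  let := linearOrderOfSTO r
  obtain ⟨l, hl, hmin⟩ := A.exists_min_image id hA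
  exact ⟨l, hl, fun y hy hyl => (hmin y hy).lt_of_ne hyl.symm⟩

end Maximum

variable {r : X → X → Prop} {c : Finset X → X} {Γ : Finset X → Finset X} {A : Finset X} {l x : X}

lemma ChoiceFun.isRMax_pair_choice_erase (hc : ChoiceFun c) (hA : A.Nontrivial)
    (hl : IsRMax r (· ∈ A) l) : IsRMax r (· ∈ ({c (A.erase l), l} : Finset X)) l := by
  obtain ⟨hne, hmem⟩ := mem_erase.1 (hc _ (hA.erase_nonempty (a := l)))
  exact isRMax_pair (hl.2 _ hmem hne)

lemma ChoiceFun.choice_pair_eq_or_eq (hc : ChoiceFun c) (a b : X) :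
    c {a, b} = a ∨ c {a, b} = b := by
  simpa only [mem_insert, mem_singleton] using hc {a, b} (insert_nonempty a {b})

namespace ListRationalizes

lemma choice_eq_erase_or_eq (h : ListRationalizes r c) (hc : ChoiceFun c) (hA : A.Nontrivial)
    (hl : IsRMax r (· ∈ A) l) : c A = c (A.erase l) ∨ c A = l := by
  rw [h.2 A (one_lt_card_iff_nontrivial.2 hA) l hl]
  exact hc.choice_pair_eq_or_eq _ _

lemma choice_erase_of_rel (h : ListRationalizes r c) (hc : ChoiceFun c) (hx : x ∈ A)
    (hxc : r x (c A)) : c (A.erase x) = c A := by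
  induction A using Finset.strongInduction with
  | H A ih =>
    have hcA : c A ∈ A := hc A ⟨x, hx⟩
    have hxc_ne : x ≠ c A := h.1.1.1.ne hxc
    have hA : A.Nontrivial := ⟨x, hx, c A, hcA, hxc_ne⟩
    obtain ⟨l, hl⟩ := h.1.exists_isRMax ⟨x, hx⟩
    have hcl : c A ≠ l := fun hcl => hl.not_rel h.1.1.1 hx (hcl ▸ hxc)
    have hcA_erase : c A = c (A.erase l) :=
      (h.choice_eq_erase_or_eq hc hA hl).resolve_right hcl
    obtain rfl | hxl := eq_or_ne x l
    · exact hcA_erase.symm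
    have hlx : l ∈ A.erase x := mem_erase.2 ⟨hxl.symm, hl.1⟩
    have hAx : (A.erase x).Nontrivial :=
      ⟨l, hlx, c A, mem_erase.2 ⟨hxc_ne.symm, hcA⟩, hcl.symm⟩
    have hlx_max : IsRMax r (· ∈ A.erase x) l := hl.of_imp (fun _ => mem_of_mem_erase) hlx
    have hrec : c ((A.erase l).erase x) = c (A.erase l) :=
      ih _ (erase_ssubset hl.1) (mem_erase.2 ⟨hxl, hx⟩) (hcA_erase ▸ hxc)
    calc
      c (A.erase x) = c {c ((A.erase x).erase l), l} :=
        h.2 _ (one_lt_card_iff_nontrivial.2 hAx) l hlx_max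
      _ = c {c (A.erase l), l} := by rw [erase_right_comm, hrec]
      _ = c A := (h.2 A (one_lt_card_iff_nontrivial.2 hA) l hl).symm

end ListRationalizes

open Classical in
/-- The weak lower contour set of the choice: the alternatives of the menu `A` that are equal to or
`r`-below `c A`. It is the attention filter that explains a list rational `c`. -/
noncomputable def lowerContour (r : X → X → Prop) (c : Finset X → X) (A : Finset X) : Finset X :=
  {y ∈ A | y = c A ∨ r (c A) y}

lemma mem_lowerContour : x ∈ lowerContour r c A ↔ x ∈ A ∧ (x = c A ∨ r (c A) x) := by
  simp only [lowerContour, mem_filter]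

lemma lowerContour_subset : lowerContour r c A ⊆ A :=
  fun _ hx => (mem_lowerContour.1 hx).1

lemma isRMax_lowerContour (hcA : c A ∈ A) : IsRMax r (· ∈ lowerContour r c A) (c A) :=
  ⟨mem_lowerContour.2 ⟨hcA, Or.inl rfl⟩,
    fun _ hy hne => (mem_lowerContour.1 hy).2.resolve_left hne⟩

lemma lowerContour_erase (h : c (A.erase x) = c A) :
    lowerContour r c (A.erase x) = (lowerContour r c A).erase x := by
  ext y
  simp only [mem_lowerContour, mem_erase, h, and_assoc]

lemma ChoiceFun.choiceCorr_lowerContour (hc : ChoiceFun c) : ChoiceCorr (lowerContour r c) :=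
  fun A hA => ⟨⟨c A, (isRMax_lowerContour (r := r) (hc A hA)).1⟩, lowerContour_subset⟩

namespace ListRationalizes

lemma lowerContour_eq_erase_of_notMem (h : ListRationalizes r c) (hc : ChoiceFun c) (hx : x ∈ A)
    (hxΓ : x ∉ lowerContour r c A) : lowerContour r c A = lowerContour r c (A.erase x) := by
  have hnot : ¬(x = c A ∨ r (c A) x) := fun hxc => hxΓ (mem_lowerContour.2 ⟨hx, hxc⟩)
  obtain ⟨hne, hnr⟩ := not_or.1 hnot
  have hxc : r x (c A) := (h.1.2 _ _ hne).resolve_right hnr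
  rw [lowerContour_erase (h.choice_erase_of_rel hc hx hxc), erase_eq_of_notMem hxΓ]

lemma mem_lowerContour_pair_iff (h : ListRationalizes r c) (hc : ChoiceFun c) (hA : A.Nontrivial)
    (hl : IsRMax r (· ∈ A) l) :
    l ∈ lowerContour r c {c (A.erase l), l} ↔ l ∈ lowerContour r c A := by
  have mem_iff {B : Finset X} (hB : IsRMax r (· ∈ B) l) : l ∈ lowerContour r c B ↔ c B = l :=
    hB.pred_iff_eq h.1.1.1 (isRMax_lowerContour (hc B ⟨l, hB.1⟩)) fun _ hy =>
      lowerContour_subset hy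
  rw [mem_iff (hc.isRMax_pair_choice_erase hA hl), mem_iff hl,
    h.2 A (one_lt_card_iff_nontrivial.2 hA) l hl]

lemma competitiveFilter_lowerContour (h : ListRationalizes r c) (hc : ChoiceFun c) :
    CompetitiveFilter r (lowerContour r c) := by
  refine ⟨hc.choiceCorr_lowerContour,
    fun A _ x hx hxΓ => h.lowerContour_eq_erase_of_notMem hc hx hxΓ, fun A hcard x l hl hx => ?_⟩
  have hA : A.Nontrivial := one_lt_card_iff_nontrivial.1 hcard
  obtain rfl : x = c (A.erase l) :=
    hx.unique h.1.1.1 (isRMax_lowerContour (hc _ hA.erase_nonempty))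
  exact h.mem_lowerContour_pair_iff hc hA hl

lemma explByCCLA_lowerContour (h : ListRationalizes r c) (hc : ChoiceFun c) :
    ExplByCCLA (lowerContour r c) r c :=
  ⟨h.1, h.competitiveFilter_lowerContour hc, fun A hA => isRMax_lowerContour (hc A hA)⟩

end ListRationalizes

namespace ExplByCCLA

lemma choiceFun (h : ExplByCCLA Γ r c) : ChoiceFun c :=
  fun A hA => (h.2.1.1 A hA).2 (h.2.2 A hA).1

lemma mem_iff_choice_eq (h : ExplByCCLA Γ r c) (hl : IsRMax r (· ∈ A) l) :
    l ∈ Γ A ↔ c A = l :=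
  have hA : A.Nonempty := ⟨l, hl.1⟩
  hl.pred_iff_eq h.1.1.1 (h.2.2 A hA) fun _ hy => (h.2.1.1 A hA).2 hy

lemma choice_eq_erase_of_notMem (h : ExplByCCLA Γ r c) (hA : A.Nontrivial) (hx : x ∈ A)
    (hxΓ : x ∉ Γ A) : c A = c (A.erase x) := by
  have hcA := h.2.2 A hA.nonempty
  rw [h.2.1.2.1 A hA.nonempty x hx hxΓ] at hcA
  exact hcA.unique h.1.1.1 (h.2.2 _ hA.erase_nonempty)

lemma choice_pair_eq_iff (h : ExplByCCLA Γ r c) (hA : A.Nontrivial) (hl : IsRMax r (· ∈ A) l) :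
    c {c (A.erase l), l} = l ↔ c A = l := by
  rw [← h.mem_iff_choice_eq (h.choiceFun.isRMax_pair_choice_erase hA hl),
    ← h.mem_iff_choice_eq hl]
  exact h.2.1.2.2 A (one_lt_card_iff_nontrivial.2 hA) _ l hl (h.2.2 _ hA.erase_nonempty)

lemma listRationalizes (h : ExplByCCLA Γ r c) : ListRationalizes r c := by
  refine ⟨h.1, fun A hcard l hl => ?_⟩
  have hA : A.Nontrivial := one_lt_card_iff_nontrivial.1 hcard
  have hpair := h.choice_pair_eq_iff hA hl
  by_cases hcl : c A = l
  · exact hcl.trans (hpair.2 hcl).symm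
  · calc
      c A = c (A.erase l) :=
        h.choice_eq_erase_of_notMem hA hl.1 (mt (h.mem_iff_choice_eq hl).1 hcl)
      _ = c {c (A.erase l), l} :=
        ((h.choiceFun.choice_pair_eq_or_eq _ _).resolve_right (mt hpair.1 hcl)).symm

end ExplByCCLA

theorem stmt_14_general (rhd : X → X → Prop) (c : Finset X → X) (hc : ChoiceFun c) :
    ListRationalizes rhd c ↔ ∃ Γ : Finset X → Finset X, ExplByCCLA Γ rhd c :=
  ⟨fun h => ⟨lowerContour rhd c, h.explByCCLA_lowerContour hc⟩, fun ⟨_, h⟩ => h.listRationalizes⟩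

theorem stmt_14 [Fintype X] [Nonempty X] (rhd : X → X → Prop) (hrhd : StrictLinear rhd)
    (c : Finset X → X) (hc : ChoiceFun c) :
    ListRationalizes rhd c ↔
      ∃ Γ : Finset X → Finset X, ExplByCCLA Γ rhd c :=
  stmt_14_general rhd c hc
end

section
/- Let c be a choice function on a finite nonempty set X. For every switch (A,B) of c, there exist a menu C and an element x ∈ X such that A ⊆ C\{x} ⊆ C ⊆ B and (C\{x},C) is a minimal switch. -/
open Finset

variable {X : Type*} [DecidableEq X]

theorem exists_erase_not_of_subset {P : Finset X → Prop} {A B : Finset X} (hAB : A ⊆ B)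
    (hA : ¬ P A) (hB : P B) :
    ∃ (C : Finset X) (x : X), x ∈ C ∧ A ⊆ C.erase x ∧ C ⊆ B ∧ P C ∧ ¬ P (C.erase x) := by
  obtain ⟨C, hCB, hC⟩ :=
    exists_minimal_le_of_wellFoundedLT (fun D : Finset X => A ⊆ D ∧ P D) B ⟨hAB, hB⟩
  obtain ⟨hAC, hPC⟩ := hC.prop
  have hne : A ≠ C := fun h => hA (h ▸ hPC)
  obtain ⟨x, hxC, hxA⟩ := exists_of_ssubset (hAC.ssubset_of_ne hne)
  have hAe : A ⊆ C.erase x := subset_erase.2 ⟨hAC, hxA⟩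
  exact ⟨C, x, hxC, hAe, hCB, hPC, fun h => hC.not_prop_of_lt (erase_ssubset hxC) ⟨hAe, h⟩⟩

theorem stmt_18_general {c : Finset X → X} {A B : Finset X} (hsw : Switch c A B) :
    ∃ (C : Finset X) (x : X), x ∈ C ∧ A ⊆ C.erase x ∧ C ⊆ B ∧
      x ≠ c C ∧ c (C.erase x) ≠ c C := by
  obtain ⟨-, hAB, hcB, hne⟩ := hsw
  obtain ⟨C, x, hxC, hAC, hCB, hcC, hcx⟩ :=
    exists_erase_not_of_subset (P := fun D => c D = c B) hAB hne rfl
  have hcCx : c C ∈ C.erase x := hAC (hcC ▸ hcB)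
  exact ⟨C, x, hxC, hAC, hCB, (ne_of_mem_erase hcCx).symm, hcC ▸ hcx⟩

theorem stmt_18 [Fintype X] [Nonempty X] (c : Finset X → X) (hc : ChoiceFun c)
    (A B : Finset X) (hsw : Switch c A B) :
    ∃ (C : Finset X) (x : X), x ∈ C ∧ A ⊆ C.erase x ∧ C ⊆ B ∧
      x ≠ c C ∧ c (C.erase x) ≠ c C :=
  stmt_18_general hsw
end
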